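/- Let f be a self-usage utility function, let p_a, B_a, p_b ≥ 0 with p_b < p_a + B_a < f'(0) and p_b < f'(0), and let s_a, s_b ∈ (0,1) satisfy f'(1−s_a) = p_a + B_a and f'(1−s_b) = p_b (so s_b < s_a). Then (p_a + B_a − p_b)·s_a − (f(1−s_b) − f(1−s_a) − p_b·(s_a − s_b)) ≥ (p_a + B_a − p_b)·s_b > 0. -/

import Mathlib

/-- A self-usage utility function `f` with derivative `f'`:
differentiable on `[0,1]`, strictly increasing on `[0,1]`,
strictly concave on `[0,1]` (with `f'` strictly decreasing), and `f' 1 = 0`. -/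
def SelfUsage (f f' : ℝ → ℝ) : Prop :=
  (∀ x ∈ Set.Icc (0:ℝ) 1, HasDerivWithinAt f (f' x) (Set.Icc (0:ℝ) 1) x) ∧
  StrictMonoOn f (Set.Icc (0:ℝ) 1) ∧
  StrictConcaveOn ℝ (Set.Icc (0:ℝ) 1) f ∧
  StrictAntiOn f' (Set.Icc (0:ℝ) 1) ∧
  f' 1 = 0

theorem le_add_deriv_mul_sub_of_concaveOn {S : Set ℝ} {f : ℝ → ℝ} {f' x y : ℝ}
    (hf : ConcaveOn ℝ S f) (hx : x ∈ S) (hy : y ∈ S) (hf' : HasDerivWithinAt f f' S x) :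
    f y ≤ f x + f' * (y - x) := by
  rcases lt_trichotomy x y with hxy | rfl | hyx
  · have hslope : (f y - f x) / (y - x) ≤ f' := by
      simpa only [slope_def_field] using hf.slope_le_of_hasDerivWithinAt hx hy hxy hf'
    linarith [(div_le_iff₀ (sub_pos.2 hxy)).1 hslope]
  · simp
  · have hslope : f' ≤ (f x - f y) / (x - y) := by
      simpa only [slope_def_field] using hf.le_slope_of_hasDerivWithinAt hy hx hyx hf'
    linarith [(le_div_iff₀ (sub_pos.2 hyx)).1 hslope]

theorem feasible_threshold_positive_general {f : ℝ → ℝ} {p pb sa sb : ℝ}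
    (hf : ConcaveOn ℝ (Set.Icc 0 1) f) (hp : pb < p)
    (hsa : sa ∈ Set.Icc (0 : ℝ) 1) (hsb : sb ∈ Set.Ioc (0 : ℝ) 1)
    (hda : HasDerivWithinAt f p (Set.Icc 0 1) (1 - sa)) :
    (p - pb) * sb ≤ (p - pb) * sa - (f (1 - sb) - f (1 - sa) - pb * (sa - sb)) ∧
      0 < (p - pb) * sb := by
  have htangent : f (1 - sb) ≤ f (1 - sa) + p * ((1 - sb) - (1 - sa)) :=
    le_add_deriv_mul_sub_of_concaveOn hf (Set.Icc.one_sub_mem hsa)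
      (Set.Icc.one_sub_mem (Set.Ioc_subset_Icc_self hsb)) hda
  exact ⟨by linarith, mul_pos (sub_pos.2 hp) hsb.1⟩

/-- the maximal feasible B_a·t_a under a linear loyalty program
attracting an owner away from a platform paying p_b is at least
(p_a + B_a − p_b)·s_b, hence strictly positive. -/
theorem feasible_threshold_positive
    (f f' : ℝ → ℝ) (hf : SelfUsage f f')
    (pa Ba pb : ℝ) (hpa : 0 ≤ pa) (hBa : 0 ≤ Ba) (hpb : 0 ≤ pb)
    (h1 : pb < pa + Ba) (h2 : pa + Ba < f' 0) (h3 : pb < f' 0)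
    (sa sb : ℝ) (hsa : sa ∈ Set.Ioo (0:ℝ) 1) (hsb : sb ∈ Set.Ioo (0:ℝ) 1)
    (hda : f' (1 - sa) = pa + Ba) (hdb : f' (1 - sb) = pb) :
    (pa + Ba - pb) * sb
      ≤ (pa + Ba - pb) * sa - (f (1 - sb) - f (1 - sa) - pb * (sa - sb)) ∧
    0 < (pa + Ba - pb) * sb := by
  obtain ⟨hderiv, -, hconcave, -, -⟩ := hf
  have hsa' : sa ∈ Set.Icc (0 : ℝ) 1 := Set.Ioo_subset_Icc_self hsa
  exact feasible_threshold_positive_general hconcave.concaveOn h1 hsa'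
    (Set.Ioo_subset_Ioc_self hsb) (hda ▸ hderiv (1 - sa) (Set.Icc.one_sub_mem hsa'))
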